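/- Assume C is an n×n matrix with all entries positive and g is an admissible weight function with 2·L⁺(g) < 1 − τ_B(C). Then f_g has a unique fixed point x* ∈ int(Σ) and for every x ∈ int(Σ) the iterates f_g^s(x) converge to x* as s → ∞. -/

import Mathlib

open Set Matrix Filter Topology

/-- An admissible weight function. -/
def IsAdmissible (g g' : ℝ → ℝ) : Prop :=
  (∀ x ∈ Set.Icc (0:ℝ) 1, HasDerivWithinAt g (g' x) (Set.Icc (0:ℝ) 1) x) ∧
  ContinuousOn g' (Set.Icc (0:ℝ) 1) ∧
  g 0 = 1 ∧
  (∀ x ∈ Set.Icc (0:ℝ) 1, 0 < g x) ∧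
  (∀ x ∈ Set.Icc (0:ℝ) 1, 0 < g' x)

/-- The set of values `g'(x)/g(x)` for `x ∈ [0,1]`; its maximum is `L⁺(g)`. -/
def ratioSet (g g' : ℝ → ℝ) : Set ℝ := (fun x => g' x / g x) '' Set.Icc (0:ℝ) 1

/-- The stochastic matrix `M_g(x)`. -/
noncomputable def Mg {n : ℕ} (C : Matrix (Fin n) (Fin n) ℝ) (g : ℝ → ℝ)
    (x : Fin n → ℝ) : Matrix (Fin n) (Fin n) ℝ :=
  Matrix.of fun i j => C i j * g (x j) / ∑ k, C i k * g (x k)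

/-- The map `f_g(x) = x · M_g(x)`. -/
noncomputable def fg {n : ℕ} (C : Matrix (Fin n) (Fin n) ℝ) (g : ℝ → ℝ)
    (x : Fin n → ℝ) : Fin n → ℝ :=
  Matrix.vecMul x (Mg C g x)

/-- Hilbert's projective metric on positive vectors. -/
noncomputable def dH {n : ℕ} (x y : Fin n → ℝ) : ℝ :=
  ⨆ i, ⨆ j, Real.log ((x i * y j) / (y i * x j))

/-- The set of contraction ratios of a matrix `A` with respect to Hilbert's
projective metric; its least upper bound is Birkhoff's coefficient of ergodicity
`τ_B(A)`. -/
def birkhoffRatios {n : ℕ} (A : Matrix (Fin n) (Fin n) ℝ) : Set ℝ :=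
  {r : ℝ | ∃ x y : Fin n → ℝ, (∀ i, 0 < x i) ∧ (∀ i, 0 < y i) ∧
    (∀ c : ℝ, x ≠ c • y) ∧
    r = dH (Matrix.vecMul x A) (Matrix.vecMul y A) / dH x y}

lemma aux_log {n : ℕ} {x y : Fin n → ℝ} (hx : ∀ i, 0 < x i) (hy : ∀ i, 0 < y i) (i j : Fin n) :
    Real.log ((x i * y j) / (y i * x j)) =
      Real.log (x i) - Real.log (y i) + (Real.log (y j) - Real.log (x j)) := by
  rw [Real.log_div (mul_pos (hx i) (hy j)).ne' (mul_pos (hy i) (hx j)).ne',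
    Real.log_mul (hx i).ne' (hy j).ne', Real.log_mul (hy i).ne' (hx j).ne']
  ring

lemma aux_le_dH {n : ℕ} {x y : Fin n → ℝ} (hx : ∀ i, 0 < x i) (hy : ∀ i, 0 < y i)
    (i j : Fin n) :
    Real.log (x i) - Real.log (y i) + (Real.log (y j) - Real.log (x j)) ≤ dH x y := by
  rw [← aux_log hx hy]
  unfold dH
  refine le_trans ?_ (le_ciSup (Set.finite_range _).bddAbove i)
  exact le_ciSup (f := fun j => Real.log ((x i * y j) / (y i * x j)))
    (Set.finite_range _).bddAbove j

lemma aux_dH_le {n : ℕ} (hn : 0 < n) {x y : Fin n → ℝ} (hx : ∀ i, 0 < x i) (hy : ∀ i, 0 < y i)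
    {D : ℝ} (h : ∀ i j, Real.log (x i) - Real.log (y i) + (Real.log (y j) - Real.log (x j)) ≤ D) :
    dH x y ≤ D := by
  have : Nonempty (Fin n) := ⟨⟨0, hn⟩⟩
  unfold dH
  refine ciSup_le fun i => ciSup_le fun j => ?_
  rw [aux_log hx hy]
  exact h i j

lemma aux_dH_nonneg {n : ℕ} (hn : 0 < n) {x y : Fin n → ℝ} (hx : ∀ i, 0 < x i)
    (hy : ∀ i, 0 < y i) : 0 ≤ dH x y := by
  have := aux_le_dH hx hy ⟨0, hn⟩ ⟨0, hn⟩
  linarith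

lemma aux_vecMul_pos {n : ℕ} (hn : 0 < n) {C : Matrix (Fin n) (Fin n) ℝ}
    (hC : ∀ i j, 0 < C i j) {x : Fin n → ℝ} (hx : ∀ i, 0 < x i) (j : Fin n) :
    0 < Matrix.vecMul x C j := by
  have : Nonempty (Fin n) := ⟨⟨0, hn⟩⟩
  simp only [Matrix.vecMul, dotProduct]
  exact Finset.sum_pos (fun i _ => mul_pos (hx i) (hC i j)) Finset.univ_nonempty

lemma aux_tau_nonneg {n : ℕ} (hn : 0 < n) {C : Matrix (Fin n) (Fin n) ℝ}
    (hC : ∀ i j, 0 < C i j) {τ : ℝ} (hτ : IsLUB (birkhoffRatios C) τ) : 0 ≤ τ := by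
  obtain ⟨r, hr⟩ := hτ.nonempty
  refine le_trans ?_ (hτ.1 hr)
  obtain ⟨x, y, hx, hy, -, rfl⟩ := hr
  exact div_nonneg (aux_dH_nonneg hn (aux_vecMul_pos hn hC hx) (aux_vecMul_pos hn hC hy))
    (aux_dH_nonneg hn hx hy)

lemma aux_contr {n : ℕ} (hn : 0 < n) {C : Matrix (Fin n) (Fin n) ℝ}
    (hC : ∀ i j, 0 < C i j) {τ : ℝ} (hτ : IsLUB (birkhoffRatios C) τ)
    {x y : Fin n → ℝ} (hx : ∀ i, 0 < x i) (hy : ∀ i, 0 < y i) :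
    dH (Matrix.vecMul x C) (Matrix.vecMul y C) ≤ τ * dH x y := by
  have hτ0 := aux_tau_nonneg hn hC hτ
  have hd := aux_dH_nonneg hn hx hy
  by_cases h : ∃ c : ℝ, x = c • y
  · obtain ⟨c, rfl⟩ := h
    refine le_trans ?_ (mul_nonneg hτ0 hd)
    have hc : 0 < c := by
      have := hx ⟨0, hn⟩
      simp only [Pi.smul_apply, smul_eq_mul] at this
      exact pos_of_mul_pos_left this (hy _).le
    have hyp := aux_vecMul_pos hn hC hy
    refine aux_dH_le hn (aux_vecMul_pos hn hC hx) hyp fun i j => ?_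
    simp only [Matrix.smul_vecMul, Pi.smul_apply, smul_eq_mul]
    rw [Real.log_mul hc.ne' (hyp i).ne', Real.log_mul hc.ne' (hyp j).ne']
    linarith
  · push Not at h
    have hpos : 0 < dH x y := by
      rcases hd.lt_or_eq with h1 | h1
      · exact h1
      exfalso
      refine h (x ⟨0, hn⟩ / y ⟨0, hn⟩) ?_
      ext i
      have h2 := aux_le_dH hx hy i ⟨0, hn⟩
      have h3 := aux_le_dH hx hy ⟨0, hn⟩ i
      have h4 : Real.log (x i * y ⟨0, hn⟩) = Real.log (x ⟨0, hn⟩ * y i) := by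
        rw [Real.log_mul (hx _).ne' (hy _).ne', Real.log_mul (hx _).ne' (hy _).ne']
        linarith
      have h5 := Real.log_injOn_pos (mul_pos (hx i) (hy ⟨0, hn⟩)) (mul_pos (hx ⟨0, hn⟩) (hy i)) h4
      have := (hy ⟨0, hn⟩).ne'
      simp only [Pi.smul_apply, smul_eq_mul]
      field_simp
      exact h5
    have := hτ.1 ⟨x, y, hx, hy, h, rfl⟩
    rwa [div_le_iff₀ hpos] at this

lemma aux_sum_pos {n : ℕ} (hn : 0 < n) {C : Matrix (Fin n) (Fin n) ℝ}
    (hC : ∀ i j, 0 < C i j) {p : Fin n → ℝ} (hp : ∀ i, 0 < p i) (i : Fin n) :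
    0 < ∑ k, C i k * p k := by
  have : Nonempty (Fin n) := ⟨⟨0, hn⟩⟩
  exact Finset.sum_pos (fun k _ => mul_pos (hC i k) (hp k)) Finset.univ_nonempty

lemma aux_nonexp {n : ℕ} (hn : 0 < n) {C : Matrix (Fin n) (Fin n) ℝ}
    (hC : ∀ i j, 0 < C i j) {p q : Fin n → ℝ} (hp : ∀ i, 0 < p i) (hq : ∀ i, 0 < q i)
    {D : ℝ} (h : ∀ i j, Real.log (p i) - Real.log (q i) + (Real.log (q j) - Real.log (p j)) ≤ D)
    (i j : Fin n) :
    Real.log (∑ k, C i k * p k) - Real.log (∑ k, C i k * q k) +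
      (Real.log (∑ k, C j k * q k) - Real.log (∑ k, C j k * p k)) ≤ D := by
  have e1 : ∀ k l, p k * q l ≤ Real.exp D * (q k * p l) := by
    intro k l
    rw [← Real.log_le_log_iff (mul_pos (hp k) (hq l))
      (mul_pos (Real.exp_pos D) (mul_pos (hq k) (hp l))),
      Real.log_mul (hp k).ne' (hq l).ne', Real.log_mul (Real.exp_pos D).ne'
      (mul_pos (hq k) (hp l)).ne', Real.log_exp, Real.log_mul (hq k).ne' (hp l).ne']
    linarith [h k l]
  have e2 : (∑ k, C i k * p k) * (∑ k, C j k * q k) ≤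
      Real.exp D * ((∑ k, C i k * q k) * (∑ k, C j k * p k)) := by
    rw [Finset.sum_mul_sum, Finset.sum_mul_sum, Finset.mul_sum]
    refine Finset.sum_le_sum fun k _ => ?_
    rw [Finset.mul_sum]
    refine Finset.sum_le_sum fun l _ => ?_
    nlinarith [mul_le_mul_of_nonneg_left (e1 k l) (mul_pos (hC i k) (hC j l)).le]
  have P := fun i => aux_sum_pos hn hC hp i
  have Q := fun i => aux_sum_pos hn hC hq i
  rw [← Real.log_le_log_iff (mul_pos (P i) (Q j))
      (mul_pos (Real.exp_pos D) (mul_pos (Q i) (P j))),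
      Real.log_mul (P i).ne' (Q j).ne', Real.log_mul (Real.exp_pos D).ne'
      (mul_pos (Q i) (P j)).ne', Real.log_exp, Real.log_mul (Q i).ne' (P j).ne'] at e2
  linarith

lemma aux_sub_le_log {a b : ℝ} (ha : 0 < a) (ha1 : a ≤ 1) (hb : 0 < b) (hab : b ≤ a) :
    a - b ≤ Real.log a - Real.log b := by
  have h1 := Real.log_le_sub_one_of_pos (div_pos hb ha)
  rw [Real.log_div hb.ne' ha.ne'] at h1
  have h2 : 1 - b / a = (a - b) / a := by field_simp
  have h3 : a - b ≤ (a - b) / a := by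
    rw [le_div_iff₀ ha]; nlinarith
  linarith

lemma aux_exists_le {n : ℕ} (hn : 0 < n) {x y : Fin n → ℝ} (hx : x ∈ stdSimplex ℝ (Fin n))
    (hy : y ∈ stdSimplex ℝ (Fin n)) : ∃ k, x k ≤ y k := by
  have : Nonempty (Fin n) := ⟨⟨0, hn⟩⟩
  by_contra! h
  have := Finset.sum_lt_sum_of_nonempty (s := (Finset.univ : Finset (Fin n)))
    Finset.univ_nonempty (fun i _ => h i)
  rw [hx.2, hy.2] at this
  exact lt_irrefl _ this

lemma aux_le_one {n : ℕ} {x : Fin n → ℝ} (hx : x ∈ stdSimplex ℝ (Fin n)) (i : Fin n) :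
    x i ≤ 1 := by
  rw [← hx.2]
  exact Finset.single_le_sum (fun i _ => hx.1 i) (Finset.mem_univ i)

lemma aux_sub_le_dH {n : ℕ} (hn : 0 < n) {x y : Fin n → ℝ} (hx : x ∈ stdSimplex ℝ (Fin n))
    (hy : y ∈ stdSimplex ℝ (Fin n)) (hx0 : ∀ i, 0 < x i) (hy0 : ∀ i, 0 < y i) (i : Fin n) :
    x i - y i ≤ dH x y := by
  rcases le_total (x i) (y i) with h | h
  · linarith [aux_dH_nonneg hn hx0 hy0]
  obtain ⟨k, hk⟩ := aux_exists_le hn hx hy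
  have := aux_le_dH hx0 hy0 i k
  have h2 := Real.log_le_log (hx0 k) hk
  linarith [aux_sub_le_log (hx0 i) (aux_le_one hx i) (hy0 i) h]

lemma aux_sub_le_dH' {n : ℕ} (hn : 0 < n) {x y : Fin n → ℝ} (hx : x ∈ stdSimplex ℝ (Fin n))
    (hy : y ∈ stdSimplex ℝ (Fin n)) (hx0 : ∀ i, 0 < x i) (hy0 : ∀ i, 0 < y i) (i : Fin n) :
    y i - x i ≤ dH x y := by
  rcases le_total (y i) (x i) with h | h
  · linarith [aux_dH_nonneg hn hx0 hy0]
  obtain ⟨k, hk⟩ := aux_exists_le hn hy hx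
  have := aux_le_dH hx0 hy0 k i
  have h2 := Real.log_le_log (hy0 k) hk
  linarith [aux_sub_le_log (hy0 i) (aux_le_one hy i) (hx0 i) h]

lemma aux_dist_le {n : ℕ} (hn : 0 < n) {x y : Fin n → ℝ} (hx : x ∈ stdSimplex ℝ (Fin n))
    (hy : y ∈ stdSimplex ℝ (Fin n)) (hx0 : ∀ i, 0 < x i) (hy0 : ∀ i, 0 < y i) :
    dist x y ≤ dH x y := by
  rw [dist_pi_le_iff (aux_dH_nonneg hn hx0 hy0)]
  intro i
  rw [Real.dist_eq, abs_le]
  constructor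
  · linarith [aux_sub_le_dH' hn hx hy hx0 hy0 i]
  · exact aux_sub_le_dH hn hx hy hx0 hy0 i

lemma aux_log_deriv {g g' : ℝ → ℝ} (hg : IsAdmissible g g') {x : ℝ}
    (hx : x ∈ Set.Icc (0:ℝ) 1) :
    HasDerivWithinAt (fun t => Real.log (g t)) (g' x / g x) (Set.Icc (0:ℝ) 1) x :=
  (hg.1 x hx).log (hg.2.2.2.1 x hx).ne'

lemma aux_monotone {f f' : ℝ → ℝ}
    (hd : ∀ x ∈ Set.Icc (0:ℝ) 1, HasDerivWithinAt f (f' x) (Set.Icc (0:ℝ) 1) x)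
    (h0 : ∀ x ∈ Set.Icc (0:ℝ) 1, 0 ≤ f' x) : MonotoneOn f (Set.Icc (0:ℝ) 1) := by
  have hd' : ∀ x ∈ interior (Set.Icc (0:ℝ) 1), HasDerivAt f (f' x) x := fun x hx =>
    (hd x (interior_subset hx)).hasDerivAt (mem_interior_iff_mem_nhds.1 hx)
  refine monotoneOn_of_deriv_nonneg (convex_Icc 0 1)
    (fun x hx => (hd x hx).continuousWithinAt)
    (fun x hx => (hd' x hx).differentiableAt.differentiableWithinAt) fun x hx => ?_
  rw [(hd' x hx).deriv]
  exact h0 x (interior_subset hx)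

lemma aux_mono {g g' : ℝ → ℝ} (hg : IsAdmissible g g') :
    MonotoneOn (fun t => Real.log (g t)) (Set.Icc (0:ℝ) 1) := by
  exact aux_monotone (f' := fun x => g' x / g x) (fun x hx => aux_log_deriv hg hx)
    (fun x hx => (div_pos (hg.2.2.2.2 x hx) (hg.2.2.2.1 x hx)).le)

lemma aux_lip {g g' : ℝ → ℝ} (hg : IsAdmissible g g') {Lp : ℝ}
    (hLp : IsGreatest (ratioSet g g') Lp) :
    MonotoneOn (fun t => Lp * t - Real.log (g t)) (Set.Icc (0:ℝ) 1) := by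
  have hd : ∀ x ∈ Set.Icc (0:ℝ) 1, HasDerivWithinAt (fun t => Lp * t - Real.log (g t))
      (Lp * 1 - g' x / g x) (Set.Icc (0:ℝ) 1) x := fun x hx =>
    ((hasDerivWithinAt_id x _).const_mul Lp).sub (aux_log_deriv hg hx)
  refine aux_monotone (f' := fun x => Lp * 1 - g' x / g x) hd (fun x hx => ?_)
  have := hLp.2 ⟨x, hx, rfl⟩
  simp only at this
  linarith

lemma aux_mem {n : ℕ} {x : Fin n → ℝ} (hx : x ∈ stdSimplex ℝ (Fin n)) (i : Fin n) :
    x i ∈ Set.Icc (0:ℝ) 1 := ⟨hx.1 i, aux_le_one hx i⟩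

lemma aux_Lp_pos {g g' : ℝ → ℝ} (hg : IsAdmissible g g') {Lp : ℝ}
    (hLp : IsGreatest (ratioSet g g') Lp) : 0 < Lp := by
  obtain ⟨x, hx, rfl⟩ := hLp.1
  exact div_pos (hg.2.2.2.2 x hx) (hg.2.2.2.1 x hx)

lemma aux_g {n : ℕ} (hn : 0 < n) {g g' : ℝ → ℝ} (hg : IsAdmissible g g') {Lp : ℝ}
    (hLp : IsGreatest (ratioSet g g') Lp) {x y : Fin n → ℝ} (hx : x ∈ stdSimplex ℝ (Fin n))
    (hy : y ∈ stdSimplex ℝ (Fin n)) (hx0 : ∀ i, 0 < x i) (hy0 : ∀ i, 0 < y i) (i j : Fin n) :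
    Real.log (g (x i)) - Real.log (g (y i)) + (Real.log (g (y j)) - Real.log (g (x j)))
      ≤ Lp * dH x y := by
  have hL := aux_Lp_pos hg hLp
  have hm := aux_mono hg
  have hl := aux_lip hg hLp
  have hi := aux_sub_le_dH hn hx hy hx0 hy0 i
  have hj := aux_sub_le_dH' hn hx hy hx0 hy0 j
  have hd := aux_dH_nonneg hn hx0 hy0
  rcases le_total (x i) (y i) with h1 | h1 <;> rcases le_total (y j) (x j) with h2 | h2
  · have a1 := hm (aux_mem hx i) (aux_mem hy i) h1
    have a2 := hm (aux_mem hy j) (aux_mem hx j) h2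
    simp only at a1 a2
    nlinarith
  · have a1 := hm (aux_mem hx i) (aux_mem hy i) h1
    have a2 := hl (aux_mem hx j) (aux_mem hy j) h2
    simp only at a1 a2
    nlinarith
  · have a1 := hl (aux_mem hy i) (aux_mem hx i) h1
    have a2 := hm (aux_mem hy j) (aux_mem hx j) h2
    simp only at a1 a2
    nlinarith
  · have a1 := hl (aux_mem hy i) (aux_mem hx i) h1
    have a2 := hl (aux_mem hx j) (aux_mem hy j) h2
    have a3 := aux_sub_le_log (hx0 i) (aux_le_one hx i) (hy0 i) h1
    have a4 := aux_sub_le_log (hy0 j) (aux_le_one hy j) (hx0 j) h2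
    have a5 := aux_le_dH hx0 hy0 i j
    simp only at a1 a2
    nlinarith

/-- The vector `x_i / s_i(x)`. -/
noncomputable def auxU {n : ℕ} (C : Matrix (Fin n) (Fin n) ℝ) (g : ℝ → ℝ)
    (x : Fin n → ℝ) : Fin n → ℝ := fun i => x i / ∑ k, C i k * g (x k)

lemma aux_fg {n : ℕ} (C : Matrix (Fin n) (Fin n) ℝ) (g : ℝ → ℝ) (x : Fin n → ℝ) (j : Fin n) :
    fg C g x j = g (x j) * Matrix.vecMul (auxU C g x) C j := by
  simp only [fg, Mg, Matrix.vecMul, dotProduct, auxU, Matrix.of_apply, Finset.mul_sum]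
  refine Finset.sum_congr rfl fun i _ => ?_
  ring

section
variable {n : ℕ} {C : Matrix (Fin n) (Fin n) ℝ} {g g' : ℝ → ℝ}

lemma aux_gpos (hg : IsAdmissible g g') {x : Fin n → ℝ} (hx : x ∈ stdSimplex ℝ (Fin n))
    (i : Fin n) : 0 < g (x i) := hg.2.2.2.1 _ (aux_mem hx i)

lemma aux_U_pos (hn : 0 < n) (hC : ∀ i j, 0 < C i j) (hg : IsAdmissible g g')
    {x : Fin n → ℝ} (hx : x ∈ stdSimplex ℝ (Fin n)) (hx0 : ∀ i, 0 < x i) (i : Fin n) :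
    0 < auxU C g x i :=
  div_pos (hx0 i) (aux_sum_pos hn hC (p := fun k => g (x k)) (aux_gpos hg hx) i)

lemma aux_fg_pos (hn : 0 < n) (hC : ∀ i j, 0 < C i j) (hg : IsAdmissible g g')
    {x : Fin n → ℝ} (hx : x ∈ stdSimplex ℝ (Fin n)) (j : Fin n) : 0 < fg C g x j := by
  have hs := aux_sum_pos hn hC (p := fun k => g (x k)) (aux_gpos hg hx)
  rw [aux_fg]
  refine mul_pos (aux_gpos hg hx j) ?_
  simp only [Matrix.vecMul, dotProduct, auxU]
  have hne : ∃ i, 0 < x i := by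
    by_contra! h
    have : ∑ i, x i ≤ 0 := Finset.sum_nonpos fun i _ => h i
    rw [hx.2] at this
    linarith
  obtain ⟨i, hi⟩ := hne
  exact Finset.sum_pos' (fun i _ => mul_nonneg (div_nonneg (hx.1 i) (hs i).le) (hC i j).le)
    ⟨i, Finset.mem_univ i, mul_pos (div_pos hi (hs i)) (hC i j)⟩

lemma aux_fg_mem (hn : 0 < n) (hC : ∀ i j, 0 < C i j) (hg : IsAdmissible g g')
    {x : Fin n → ℝ} (hx : x ∈ stdSimplex ℝ (Fin n)) : fg C g x ∈ stdSimplex ℝ (Fin n) := by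
  refine ⟨fun i => (aux_fg_pos hn hC hg hx i).le, ?_⟩
  have hs := aux_sum_pos hn hC (p := fun k => g (x k)) (aux_gpos hg hx)
  simp only [fg, Mg, Matrix.vecMul, dotProduct, Matrix.of_apply]
  rw [Finset.sum_comm]
  rw [← hx.2]
  refine Finset.sum_congr rfl fun i _ => ?_
  rw [← Finset.mul_sum, ← Finset.sum_div, div_self (hs i).ne', mul_one]

lemma aux_fg_cont (hn : 0 < n) (hC : ∀ i j, 0 < C i j) (hg : IsAdmissible g g') :
    ContinuousOn (fg C g) (stdSimplex ℝ (Fin n)) := by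
  have hgc : ContinuousOn g (Set.Icc (0:ℝ) 1) := fun x hx => (hg.1 x hx).continuousWithinAt
  have hgi : ∀ i : Fin n, ContinuousOn (fun x : Fin n → ℝ => g (x i)) (stdSimplex ℝ (Fin n)) :=
    fun i => hgc.comp (continuous_apply i).continuousOn fun x hx => aux_mem hx i
  refine continuousOn_pi.2 fun j => ?_
  simp only [fg, Mg, Matrix.vecMul, dotProduct, Matrix.of_apply]
  refine continuousOn_finsetSum _ fun i _ => ?_
  refine (continuous_apply i).continuousOn.mul (ContinuousOn.div ?_ ?_ ?_)
  · exact continuousOn_const.mul (hgi j)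
  · exact continuousOn_finsetSum _ fun k _ => continuousOn_const.mul (hgi k)
  · exact fun x hx => (aux_sum_pos hn hC (p := fun k => g (x k)) (aux_gpos hg hx) i).ne'

lemma aux_main (hn : 0 < n) (hC : ∀ i j, 0 < C i j) (hg : IsAdmissible g g') {Lp : ℝ}
    (hLp : IsGreatest (ratioSet g g') Lp) {τ : ℝ} (hτ : IsLUB (birkhoffRatios C) τ)
    {x y : Fin n → ℝ} (hx : x ∈ stdSimplex ℝ (Fin n))
    (hy : y ∈ stdSimplex ℝ (Fin n)) (hx0 : ∀ i, 0 < x i) (hy0 : ∀ i, 0 < y i) :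
    dH (fg C g x) (fg C g y) ≤ (Lp + τ * (1 + Lp)) * dH x y := by
  have hG := aux_g hn hg hLp hx hy hx0 hy0
  have hux := aux_U_pos hn hC hg hx hx0
  have huy := aux_U_pos hn hC hg hy hy0
  have hU : dH (auxU C g x) (auxU C g y) ≤ (1 + Lp) * dH x y := by
    refine aux_dH_le hn hux huy fun i j => ?_
    have h1 := aux_nonexp hn hC (p := fun k => g (x k)) (q := fun k => g (y k))
      (aux_gpos hg hx) (aux_gpos hg hy) hG j i
    have sx := aux_sum_pos hn hC (p := fun k => g (x k)) (aux_gpos hg hx)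
    have sy := aux_sum_pos hn hC (p := fun k => g (y k)) (aux_gpos hg hy)
    have h2 := aux_le_dH hx0 hy0 i j
    simp only [auxU]
    rw [Real.log_div (hx0 i).ne' (sx i).ne', Real.log_div (hx0 j).ne' (sx j).ne',
      Real.log_div (hy0 i).ne' (sy i).ne', Real.log_div (hy0 j).ne' (sy j).ne']
    linarith
  have hV := aux_contr hn hC hτ hux huy
  have hW := mul_le_mul_of_nonneg_left hU (aux_tau_nonneg hn hC hτ)
  refine aux_dH_le hn (aux_fg_pos hn hC hg hx) (aux_fg_pos hn hC hg hy) fun i j => ?_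
  have px := aux_vecMul_pos hn hC hux
  have py := aux_vecMul_pos hn hC huy
  have hZ := aux_le_dH px py i j
  have hg1 := hG i j
  simp only [aux_fg]
  rw [Real.log_mul (aux_gpos hg hx i).ne' (px i).ne', Real.log_mul (aux_gpos hg hx j).ne' (px j).ne',
    Real.log_mul (aux_gpos hg hy i).ne' (py i).ne', Real.log_mul (aux_gpos hg hy j).ne' (py j).ne']
  linarith

end

theorem fg_contraction_unique_fixed_point
    (n : ℕ) (hn : 0 < n) (C : Matrix (Fin n) (Fin n) ℝ)
    (hCpos : ∀ i j, 0 < C i j)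
    (g g' : ℝ → ℝ) (hg : IsAdmissible g g')
    (Lp : ℝ) (hLp : IsGreatest (ratioSet g g') Lp)
    (τ : ℝ) (hτ : IsLUB (birkhoffRatios C) τ)
    (hsmall : 2 * Lp < 1 - τ) :
    ∃ xs ∈ stdSimplex ℝ (Fin n), (∀ i, 0 < xs i) ∧ fg C g xs = xs ∧
      (∀ y ∈ stdSimplex ℝ (Fin n), (∀ i, 0 < y i) → fg C g y = y → y = xs) ∧
      ∀ x ∈ stdSimplex ℝ (Fin n), (∀ i, 0 < x i) →
        Tendsto (fun s : ℕ => (fg C g)^[s] x) atTop (𝓝 xs) := by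
  set S := stdSimplex ℝ (Fin n) with hS
  have hL := aux_Lp_pos hg hLp
  have hτ0 := aux_tau_nonneg hn hCpos hτ
  obtain ⟨ρ, hρ⟩ : ∃ ρ, ρ = Lp + τ * (1 + Lp) := ⟨_, rfl⟩
  have hρ0 : 0 ≤ ρ := by rw [hρ]; positivity
  have hρ1 : ρ < 1 := by rw [hρ]; nlinarith
  have hmem : ∀ x ∈ S, ∀ s : ℕ, (fg C g)^[s] x ∈ S := by
    intro x hx s
    induction s with
    | zero => exact hx
    | succ s ih => rw [Function.iterate_succ_apply']; exact aux_fg_mem hn hCpos hg ih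
  have hpos : ∀ x ∈ S, (∀ i, 0 < x i) → ∀ s : ℕ, ∀ i, 0 < (fg C g)^[s] x i := by
    intro x hx hx0 s
    cases s with
    | zero => exact hx0
    | succ s => rw [Function.iterate_succ_apply']; exact aux_fg_pos hn hCpos hg (hmem x hx s)
  have hiter : ∀ x ∈ S, ∀ y ∈ S, (∀ i, 0 < x i) → (∀ i, 0 < y i) → ∀ s : ℕ,
      dH ((fg C g)^[s] x) ((fg C g)^[s] y) ≤ ρ ^ s * dH x y := by
    intro x hx y hy hx0 hy0 s
    induction s with
    | zero => simp
    | succ s ih =>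
      rw [Function.iterate_succ_apply', Function.iterate_succ_apply']
      refine (aux_main hn hCpos hg hLp hτ (hmem x hx s) (hmem y hy s) (hpos x hx hx0 s)
        (hpos y hy hy0 s)).trans ?_
      rw [← hρ, pow_succ', mul_assoc]
      exact mul_le_mul_of_nonneg_left ih hρ0
  have hdist : ∀ x ∈ S, ∀ y ∈ S, (∀ i, 0 < x i) → (∀ i, 0 < y i) → ∀ s : ℕ,
      dist ((fg C g)^[s] x) ((fg C g)^[s] y) ≤ dH x y * ρ ^ s := by
    intro x hx y hy hx0 hy0 s
    rw [mul_comm]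
    exact (aux_dist_le hn (hmem x hx s) (hmem y hy s) (hpos x hx hx0 s)
      (hpos y hy hy0 s)).trans (hiter x hx y hy hx0 hy0 s)
  have hn' : (0:ℝ) < n := by exact_mod_cast hn
  obtain ⟨x0, hx0S, hx00⟩ : ∃ x0 ∈ S, ∀ i, 0 < x0 i := by
    refine ⟨fun _ => 1 / (n:ℝ), ⟨fun _ => by positivity, ?_⟩, fun _ => by positivity⟩
    simp [hn'.ne']
  have hcau : CauchySeq (fun s : ℕ => (fg C g)^[s] x0) := by
    refine cauchySeq_of_le_geometric ρ (dH x0 (fg C g x0)) hρ1 fun s => ?_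
    rw [Function.iterate_succ_apply]
    exact hdist x0 hx0S _ (aux_fg_mem hn hCpos hg hx0S) hx00 (aux_fg_pos hn hCpos hg hx0S) s
  obtain ⟨xs, hxs⟩ := cauchySeq_tendsto_of_complete hcau
  have hxsS : xs ∈ S :=
    (isClosed_stdSimplex ℝ (Fin n)).mem_of_tendsto hxs (Eventually.of_forall (hmem x0 hx0S))
  have hfix : fg C g xs = xs := by
    have h1 : Tendsto (fun s : ℕ => fg C g ((fg C g)^[s] x0)) atTop (𝓝 (fg C g xs)) :=
      (aux_fg_cont hn hCpos hg xs hxsS).tendsto.comp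
        (tendsto_nhdsWithin_iff.2 ⟨hxs, Eventually.of_forall (hmem x0 hx0S)⟩)
    have h2 := (tendsto_add_atTop_iff_nat 1).2 hxs
    simp only [Function.iterate_succ_apply'] at h2
    exact tendsto_nhds_unique h1 h2
  have hxs0 : ∀ i, 0 < xs i := by
    intro i
    rw [← hfix]
    exact aux_fg_pos hn hCpos hg hxsS i
  have hconv : ∀ x ∈ S, (∀ i, 0 < x i) →
        Tendsto (fun s : ℕ => (fg C g)^[s] x) atTop (𝓝 xs) := by
    intro x hx hx0
    rw [tendsto_iff_dist_tendsto_zero]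
    have h3 : Tendsto (fun s : ℕ => dH x xs * ρ ^ s) atTop (𝓝 0) := by
      simpa using (tendsto_pow_atTop_nhds_zero_of_lt_one hρ0 hρ1).const_mul (dH x xs)
    refine squeeze_zero (fun _ => dist_nonneg) (fun s => ?_) h3
    have := hdist x hx xs hxsS hx0 hxs0 s
    rwa [Function.iterate_fixed hfix] at this
  refine ⟨xs, hxsS, hxs0, hfix, fun y hy hy0 hyf => ?_, hconv⟩
  have h4 := hconv y hy hy0
  simp only [Function.iterate_fixed hyf] at h4
  exact tendsto_nhds_unique tendsto_const_nhds h4
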